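/- arXiv:1111.5003 — 4 statements merged into one kernel-verified Lean document; each statement's English description precedes it below -/
import Mathlib

section
/- Let C ⊆ {0,1}^M be a constant weight binary code of size N, weight w, minimum distance d and average distance D, let 1 ≤ t < N, let 0 < ε < 1, and let α be a suitable absolute constant (α ≥ √2·(1 + t/(N-1)) suffices). If α·√(t·ln(2(N-t)/ε)) ≤ (w - 1 - t(w - D/2))/(w - d/2), then the M×N matrix whose columns are the codewords of C is type-1 (t,ε)-disjunct: there is a family B of t-element subsets of columns with |B| ≥ (1-ε)·binom(N,t) such that for every S ∈ B and every column ν ∉ S, the support of ν is not contained in the union of the supports of the columns in S. -/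
/-- The support of a binary vector: the set of coordinates where it equals `true`. -/
def bsupp {M : ℕ} (x : Fin M → Bool) : Finset (Fin M) :=
  Finset.univ.filter fun i => x i = true

/-!
For a codeword `ν`, `bsupp ν` can only be covered by the supports of `S` if
`∑ y ∈ S, #(bsupp ν ∩ bsupp y) ≥ w`. For a random `t`-subset `S` of `C.erase ν`, this is a sum of
samples, drawn without replacement, of a quantity with values in `[0, w - d / 2]` and mean at most
`w - D / 2`, so Hoeffding's inequality bounds the probability that it reaches `w`; a union bound
over `ν` finishes the proof.

Sampling without replacement is compared to independent sampling by Maclaurin's inequality for the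
numbers `exp (l * f i)`: deleting a larger term leaves a smaller elementary symmetric sum, so
Chebyshev's sum inequality applies to the terms and these sums.
-/

open Finset Real MeasureTheory ProbabilityTheory
open scoped BigOperators

section DoubleCounting

variable {ι M : Type*} [DecidableEq ι] [AddCommMonoid M]

lemma sum_powersetCard_succ_sum_erase (s : Finset ι) (k : ℕ) (F : ι → Finset ι → M) :
    ∑ S ∈ s.powersetCard (k + 1), ∑ i ∈ S, F i (S.erase i) =
      ∑ i ∈ s, ∑ T ∈ (s.erase i).powersetCard k, F i T := by
  rw [sum_sigma', sum_sigma']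
  refine sum_bij' (fun p _ ↦ ⟨p.2, p.1.erase p.2⟩) (fun p _ ↦ ⟨insert p.1 p.2, p.1⟩)
    ?_ ?_ ?_ ?_ (fun _ _ ↦ rfl)
  all_goals simp only [mem_sigma, mem_powersetCard, subset_erase]
  · grind
  · grind
  · rintro ⟨S, i⟩ ⟨-, hi⟩
    rw [insert_erase hi]
  · rintro ⟨i, T⟩ ⟨-, ⟨-, hi⟩, -⟩
    rw [erase_insert hi]

lemma sum_sum_powersetCard_erase (s : Finset ι) (k : ℕ) (G : Finset ι → M) :
    ∑ i ∈ s, ∑ T ∈ (s.erase i).powersetCard k, G T =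
      (#s - k) • ∑ T ∈ s.powersetCard k, G T := by
  have swap : ∑ i ∈ s, ∑ T ∈ (s.erase i).powersetCard k, G T =
      ∑ T ∈ s.powersetCard k, ∑ _i ∈ s \ T, G T :=
    sum_comm' fun i T ↦ by simp only [mem_powersetCard, subset_erase, mem_sdiff]; tauto
  rw [swap, smul_sum]
  refine sum_congr rfl fun T hT ↦ ?_
  obtain ⟨hTs, hTk⟩ := mem_powersetCard.1 hT
  rw [sum_const, card_sdiff_of_subset hTs, hTk]

lemma sum_choose_card_erase (s : Finset ι) (k : ℕ) :
    ∑ i ∈ s, (#(s.erase i)).choose k = (#s - k) * (#s).choose k := by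
  simpa only [sum_const, card_powersetCard, smul_eq_mul, mul_one] using
    sum_sum_powersetCard_erase s k fun _ ↦ (1 : ℕ)

end DoubleCounting

section Maclaurin

variable {ι : Type*}

lemma sum_powersetCard_succ_insert_prod [DecidableEq ι] {R : Type*} [CommSemiring R]
    {s : Finset ι} {j : ι} (hj : j ∉ s) (k : ℕ) (a : ι → R) :
    ∑ S ∈ (insert j s).powersetCard (k + 1), ∏ i ∈ S, a i =
      ∑ S ∈ s.powersetCard (k + 1), ∏ i ∈ S, a i +
        a j * ∑ S ∈ s.powersetCard k, ∏ i ∈ S, a i := by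
  have notMem_of_mem {l : ℕ} {S : Finset ι} (hS : S ∈ s.powersetCard l) : j ∉ S :=
    fun h ↦ hj ((mem_powersetCard.1 hS).1 h)
  rw [powersetCard_succ_insert hj, sum_union, sum_image, mul_sum]
  · exact congrArg _ (sum_congr rfl fun S hS ↦ prod_insert (notMem_of_mem hS))
  · exact fun S hS T hT ↦ insert_erase_invOn.2.injOn (notMem_of_mem hS) (notMem_of_mem hT)
  · rw [disjoint_right]
    rintro _ hS hS'
    obtain ⟨T, -, rfl⟩ := mem_image.1 hS
    exact notMem_of_mem hS' (mem_insert_self j T)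

lemma antivaryOn_sum_powersetCard_erase_prod [DecidableEq ι] {s : Finset ι} (k : ℕ)
    {a : ι → ℝ} (ha : ∀ i ∈ s, 0 ≤ a i) :
    AntivaryOn (fun i ↦ ∑ T ∈ (s.erase i).powersetCard k, ∏ j ∈ T, a j) a s := by
  intro i hi j hj hij
  have hne : i ≠ j := fun h ↦ hij.ne (congrArg a h)
  cases k with
  | zero => simp
  | succ k =>
    have erase_i : s.erase i = insert j ((s.erase i).erase j) :=
      (insert_erase (mem_erase.2 ⟨hne.symm, hj⟩)).symm
    have erase_j : s.erase j = insert i ((s.erase i).erase j) := by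
      rw [erase_right_comm, insert_erase (mem_erase.2 ⟨hne, hi⟩)]
    simp only
    rw [erase_i, erase_j, sum_powersetCard_succ_insert_prod (by simp),
      sum_powersetCard_succ_insert_prod (by simp)]
    gcongr
    refine sum_nonneg fun T hT ↦ prod_nonneg fun l hl ↦ ha l ?_
    exact mem_of_mem_erase (mem_of_mem_erase ((mem_powersetCard.1 hT).1 hl))

lemma card_mul_succ_mul_sum_powersetCard_prod_le (s : Finset ι) (k : ℕ) {a : ι → ℝ}
    (ha : ∀ i ∈ s, 0 ≤ a i) :
    #s * ((k + 1) * ∑ S ∈ s.powersetCard (k + 1), ∏ i ∈ S, a i) ≤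
      (#s - k : ℕ) * (∑ S ∈ s.powersetCard k, ∏ i ∈ S, a i) * ∑ i ∈ s, a i := by
  classical
  have succ_mul_eq : (k + 1) * ∑ S ∈ s.powersetCard (k + 1), ∏ i ∈ S, a i =
      ∑ i ∈ s, (∑ T ∈ (s.erase i).powersetCard k, ∏ j ∈ T, a j) * a i := by
    simp only [sum_mul]
    rw [← sum_powersetCard_succ_sum_erase s k fun i T ↦ (∏ j ∈ T, a j) * a i, mul_sum]
    refine sum_congr rfl fun S hS ↦ ?_
    rw [sum_congr rfl fun i hi ↦ prod_erase_mul S a hi, sum_const, (mem_powersetCard.1 hS).2,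
      nsmul_eq_mul, Nat.cast_succ]
  calc
    _ ≤ (∑ i ∈ s, ∑ T ∈ (s.erase i).powersetCard k, ∏ j ∈ T, a j) * ∑ i ∈ s, a i := by
      rw [succ_mul_eq]
      exact (antivaryOn_sum_powersetCard_erase_prod k ha).card_mul_sum_le_sum_mul_sum
    _ = _ := by rw [sum_sum_powersetCard_erase, nsmul_eq_mul]

/-- **Maclaurin's inequality**. -/
theorem expect_powersetCard_prod_le_expect_pow (s : Finset ι) (k : ℕ) {a : ι → ℝ}
    (ha : ∀ i ∈ s, 0 ≤ a i) :
    𝔼 S ∈ s.powersetCard k, ∏ i ∈ S, a i ≤ (𝔼 i ∈ s, a i) ^ k := by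
  induction k with
  | zero => simp
  | succ k ih =>
    have mean_nonneg : 0 ≤ 𝔼 i ∈ s, a i := expect_nonneg ha
    rcases lt_or_ge k #s with hk | hk
    · refine le_trans ?_ (mul_le_mul_of_nonneg_right ih mean_nonneg)
      have hs : (0 : ℝ) < #s := by exact_mod_cast Nat.zero_lt_of_lt hk
      have hchoose : (0 : ℝ) < (#s).choose k := by exact_mod_cast Nat.choose_pos hk.le
      have hsub : (0 : ℝ) < (#s - k : ℕ) := by exact_mod_cast Nat.sub_pos_of_lt hk
      have choose_succ : ((#s).choose (k + 1) : ℝ) = (#s).choose k * (#s - k : ℕ) / (k + 1) := by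
        rw [eq_div_iff (by positivity)]
        exact_mod_cast Nat.choose_succ_right_eq #s k
      have := card_mul_succ_mul_sum_powersetCard_prod_le s k ha
      simp only [expect_eq_sum_div_card, card_powersetCard, choose_succ]
      rw [div_mul_div_comm, div_div_eq_mul_div, div_le_div_iff₀ (by positivity) (by positivity)]
      convert mul_le_mul_of_nonneg_left this hchoose.le using 1 <;> ring
    · rw [powersetCard_eq_empty.2 (by omega), expect_empty]
      positivity

end Maclaurin

section Hoeffding

lemma integral_uniformOfFintype {Ω : Type*} [Fintype Ω] [Nonempty Ω] [MeasurableSpace Ω]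
    [MeasurableSingletonClass Ω] (f : Ω → ℝ) :
    ∫ ω, f ω ∂(PMF.uniformOfFintype Ω).toMeasure = 𝔼 ω, f ω := by
  simp only [PMF.integral_eq_sum, PMF.uniformOfFintype_apply, ENNReal.toReal_inv,
    ENNReal.toReal_natCast, smul_eq_mul, ← mul_sum, Fintype.expect_eq_sum_div_card,
    div_eq_inv_mul]

variable {ι : Type*} {s : Finset ι} {f : ι → ℝ} {a b : ℝ}

lemma expect_exp_mul_le (hf : ∀ i ∈ s, f i ∈ Set.Icc a b) (l : ℝ) :
    𝔼 i ∈ s, exp (l * f i) ≤ exp (l * 𝔼 i ∈ s, f i + l ^ 2 * (b - a) ^ 2 / 8) := by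
  rcases s.eq_empty_or_nonempty with rfl | hs
  · rw [expect_empty]
    positivity
  let _ : MeasurableSpace s := ⊤
  have : Nonempty s := hs.to_subtype
  have hoeffding := (hasSubgaussianMGF_of_mem_Icc (μ := (PMF.uniformOfFintype s).toMeasure)
    (Measurable.of_discrete (f := fun i : s ↦ f i)).aemeasurable
    (ae_of_all _ fun i ↦ hf i i.2)).mgf_le l
  simp only [mgf, integral_uniformOfFintype] at hoeffding
  have expect_subtype (g : ι → ℝ) : 𝔼 i : s, g i = 𝔼 i ∈ s, g i := by
    simp only [expect_eq_sum_div_card, card_univ, Fintype.card_coe, sum_coe_sort]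
  rw [expect_subtype, expect_subtype fun i ↦ exp (l * (f i - 𝔼 j ∈ s, f j))] at hoeffding
  have center (i : ι) : exp (l * f i) =
      exp (l * 𝔼 j ∈ s, f j) * exp (l * (f i - 𝔼 j ∈ s, f j)) := by
    rw [← exp_add]; ring_nf
  simp only [center, ← mul_expect]
  rw [exp_add]
  refine mul_le_mul_of_nonneg_left (hoeffding.trans_eq ?_) (exp_nonneg _)
  congr 1
  push_cast
  rw [norm_eq_abs, div_pow, sq_abs]
  ring

lemma expect_powersetCard_exp_mul_sum_le (hf : ∀ i ∈ s, f i ∈ Set.Icc a b) (t : ℕ) (l : ℝ) :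
    𝔼 S ∈ s.powersetCard t, exp (l * ∑ i ∈ S, f i) ≤
      exp (t * (l * 𝔼 i ∈ s, f i + l ^ 2 * (b - a) ^ 2 / 8)) := by
  calc
    _ = 𝔼 S ∈ s.powersetCard t, ∏ i ∈ S, exp (l * f i) := by simp only [mul_sum, exp_sum]
    _ ≤ (𝔼 i ∈ s, exp (l * f i)) ^ t :=
      expect_powersetCard_prod_le_expect_pow s t fun i _ ↦ exp_nonneg _
    _ ≤ exp (l * 𝔼 i ∈ s, f i + l ^ 2 * (b - a) ^ 2 / 8) ^ t := by
      gcongr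
      exact expect_exp_mul_le hf l
    _ = _ := (exp_nat_mul _ t).symm

lemma card_filter_le_mul_exp_le_sum {κ : Type*} (s : Finset κ) (g : κ → ℝ) (v : ℝ) {l : ℝ}
    (hl : 0 ≤ l) :
    #{x ∈ s | v ≤ g x} * exp (l * v) ≤ ∑ x ∈ s, exp (l * g x) := by
  calc
    _ = ∑ x ∈ s with v ≤ g x, exp (l * v) := by rw [sum_const, nsmul_eq_mul]
    _ ≤ ∑ x ∈ s with v ≤ g x, exp (l * g x) := by
      refine sum_le_sum fun x hx ↦ ?_
      have := (mem_filter.1 hx).2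
      gcongr
    _ ≤ _ := sum_le_sum_of_subset_of_nonneg (filter_subset _ _) fun _ _ _ ↦ exp_nonneg _

/-- **Hoeffding's inequality** for sampling without replacement. -/
theorem card_filter_powersetCard_le_sum_le (hf : ∀ i ∈ s, f i ∈ Set.Icc a b) (t : ℕ)
    {δ : ℝ} (hδ : 0 ≤ δ) :
    #{S ∈ s.powersetCard t | t * 𝔼 i ∈ s, f i + δ ≤ ∑ i ∈ S, f i} ≤
      exp (-(2 * δ ^ 2 / (t * (b - a) ^ 2))) * (#s).choose t := by
  set m := 𝔼 i ∈ s, f i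
  -- The minimizer of the exponent `t * l ^ 2 * (b - a) ^ 2 / 8 - l * δ`.
  set l := 4 * δ / (t * (b - a) ^ 2) with hl
  have exponent_eq : t * (l * m + l ^ 2 * (b - a) ^ 2 / 8) =
      -(2 * δ ^ 2 / (t * (b - a) ^ 2)) + l * (t * m + δ) := by
    have : l ^ 2 * (t * (b - a) ^ 2) = 4 * δ * l := by
      rcases eq_or_ne ((t : ℝ) * (b - a) ^ 2) 0 with h | _
      · simp only [hl, h, div_zero, mul_zero]
      · rw [hl]; field_simp
    have : 2 * δ ^ 2 / (t * (b - a) ^ 2) = δ * l / 2 := by rw [hl]; ring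
    linarith
  refine le_of_mul_le_mul_right ?_ (exp_pos (l * (t * m + δ)))
  calc
    _ ≤ ∑ S ∈ s.powersetCard t, exp (l * ∑ i ∈ S, f i) :=
      card_filter_le_mul_exp_le_sum _ _ _ (by positivity)
    _ = (#s).choose t * 𝔼 S ∈ s.powersetCard t, exp (l * ∑ i ∈ S, f i) := by
      rw [← card_powersetCard, card_mul_expect]
    _ ≤ (#s).choose t * exp (t * (l * m + l ^ 2 * (b - a) ^ 2 / 8)) := by
      gcongr
      exact expect_powersetCard_exp_mul_sum_le hf t l
    _ = _ := by rw [exponent_eq, exp_add]; ring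

end Hoeffding

section Disjunct

variable {ι κ : Type*} [DecidableEq κ]

lemma card_le_sum_card_inter_of_subset_biUnion {A : ι → Finset κ} {S : Finset ι} {U : Finset κ}
    (hU : U ⊆ S.biUnion A) : #U ≤ ∑ j ∈ S, #(U ∩ A j) := by
  calc
    #U = #(S.biUnion fun j ↦ U ∩ A j) := by rw [← inter_biUnion, inter_eq_left.2 hU]
    _ ≤ _ := card_biUnion_le

lemma card_filter_subset_biUnion_le {s : Finset ι} {A : ι → Finset κ} {U : Finset κ} {t : ℕ}
    {b L : ℝ} (ht : 1 ≤ t) (hb : 0 < b) (hU : ∀ j ∈ s, #(U ∩ A j) ≤ b)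
    (hdev : b * √(t * L / 2) ≤ #U - t * 𝔼 j ∈ s, (#(U ∩ A j) : ℝ)) :
    #{S ∈ s.powersetCard t | U ⊆ S.biUnion A} ≤ exp (-L) * (#s).choose t := by
  set δ := #U - t * 𝔼 j ∈ s, (#(U ∩ A j) : ℝ) with hδ
  have ht' : (0 : ℝ) < t := by exact_mod_cast ht
  have hδ_nonneg : 0 ≤ δ := le_trans (by positivity) hdev
  have L_le : L ≤ 2 * δ ^ 2 / (t * (b - 0) ^ 2) := by
    rw [mul_comm, ← le_div_iff₀ hb, sqrt_le_left (by positivity), div_pow] at hdev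
    rw [sub_zero, ← div_div, le_div_iff₀ (by positivity), le_div_iff₀ ht']
    rw [le_div_iff₀ (by positivity)] at hdev
    linarith
  calc
    (#{S ∈ s.powersetCard t | U ⊆ S.biUnion A} : ℝ) ≤
        #{S ∈ s.powersetCard t |
          t * 𝔼 j ∈ s, (#(U ∩ A j) : ℝ) + δ ≤ ∑ j ∈ S, (#(U ∩ A j) : ℝ)} := by
      gcongr with S
      intro hS
      rw [hδ, add_sub_cancel]
      exact_mod_cast card_le_sum_card_inter_of_subset_biUnion hS
    _ ≤ exp (-(2 * δ ^ 2 / (t * (b - 0) ^ 2))) * (#s).choose t :=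
      card_filter_powersetCard_le_sum_le (fun j hj ↦ ⟨Nat.cast_nonneg _, hU j hj⟩) t hδ_nonneg
    _ ≤ _ := by gcongr

variable [DecidableEq ι]

/-- The `t`-element subsets `S` of `C` on which the family `A` is disjunct: the union of the sets
`A j`, `j ∈ S`, contains no `A i` with `i ∈ C` outside `S`. -/
def disjunctSubsets (A : ι → Finset κ) (C : Finset ι) (t : ℕ) : Finset (Finset ι) :=
  {S ∈ C.powersetCard t | ∀ i ∈ C, i ∉ S → ¬ A i ⊆ S.biUnion A}

lemma mem_disjunctSubsets {A : ι → Finset κ} {C S : Finset ι} {t : ℕ} :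
    S ∈ disjunctSubsets A C t ↔
      (S ⊆ C ∧ #S = t) ∧ ∀ i ∈ C, i ∉ S → ¬ A i ⊆ S.biUnion A := by
  rw [disjunctSubsets, mem_filter, mem_powersetCard]

lemma choose_le_card_disjunctSubsets_add_sum (A : ι → Finset κ) (C : Finset ι) (t : ℕ) :
    (#C).choose t ≤ #(disjunctSubsets A C t) +
      ∑ i ∈ C, #{S ∈ (C.erase i).powersetCard t | A i ⊆ S.biUnion A} := by
  have cover : C.powersetCard t ⊆ disjunctSubsets A C t ∪
      C.biUnion fun i ↦ {S ∈ (C.erase i).powersetCard t | A i ⊆ S.biUnion A} := by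
    intro S hS
    simp only [mem_union, mem_disjunctSubsets, mem_biUnion, mem_filter, mem_powersetCard,
      subset_erase] at hS ⊢
    grind
  calc
    _ ≤ _ := (card_powersetCard t C).symm.trans_le (card_le_card cover)
    _ ≤ _ := card_union_le _ _
    _ ≤ _ := by gcongr; exact card_biUnion_le

lemma le_card_disjunctSubsets {A : ι → Finset κ} {C : Finset ι} {t : ℕ} {δ : ℝ}
    (h : ∀ i ∈ C, #{S ∈ (C.erase i).powersetCard t | A i ⊆ S.biUnion A} ≤
      δ * (#(C.erase i)).choose t) :
    (1 - (#C - t : ℕ) * δ) * (#C).choose t ≤ #(disjunctSubsets A C t) := by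
  have union_bound : ((#C).choose t : ℝ) ≤ #(disjunctSubsets A C t) +
      ∑ i ∈ C, (#{S ∈ (C.erase i).powersetCard t | A i ⊆ S.biUnion A} : ℝ) := by
    exact_mod_cast choose_le_card_disjunctSubsets_add_sum A C t
  have bad_le := sum_le_sum h
  have sum_choose : ∑ i ∈ C, ((#(C.erase i)).choose t : ℝ) = (#C - t : ℕ) * (#C).choose t := by
    exact_mod_cast sum_choose_card_erase C t
  rw [← mul_sum, sum_choose] at bad_le
  linarith

theorem one_sub_mul_choose_le_card_disjunctSubsets {A : ι → Finset κ} {C : Finset ι} {t : ℕ}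
    {b ε : ℝ} (ht : 1 ≤ t) (htC : t < #C) (hε : 0 < ε) (hb : 0 < b)
    (hinter : ∀ i ∈ C, ∀ j ∈ C, i ≠ j → #(A i ∩ A j) ≤ b)
    (hdev : ∀ i ∈ C, b * √(t * log ((#C - t) / ε) / 2) ≤
      #(A i) - t * 𝔼 j ∈ C.erase i, (#(A i ∩ A j) : ℝ)) :
    (1 - ε) * (#C).choose t ≤ #(disjunctSubsets A C t) := by
  have hsub : (0 : ℝ) < #C - t := sub_pos.2 (by exact_mod_cast htC)
  have exp_neg_log : exp (-log ((#C - t) / ε)) = ε / (#C - t) := by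
    rw [exp_neg, exp_log (by positivity), inv_div]
  have covered_le (i) (hi : i ∈ C) : #{S ∈ (C.erase i).powersetCard t | A i ⊆ S.biUnion A} ≤
      ε / (#C - t) * (#(C.erase i)).choose t := by
    rw [← exp_neg_log]
    exact card_filter_subset_biUnion_le ht hb
      (fun j hj ↦ hinter i hi j (mem_of_mem_erase hj) (ne_of_mem_erase hj).symm) (hdev i hi)
  simpa only [Nat.cast_sub htC.le, mul_div_cancel₀ _ hsub.ne'] using
    le_card_disjunctSubsets covered_le

end Disjunct

section ConstantWeight

variable {M w d : ℕ} {C : Finset (Fin M → Bool)}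

lemma hammingDist_eq_card_symmDiff_bsupp (x y : Fin M → Bool) :
    hammingDist x y = #(symmDiff (bsupp x) (bsupp y)) := by
  rw [hammingDist]
  congr 1
  ext i
  cases hx : x i <;> cases hy : y i <;> simp [bsupp, mem_symmDiff, hx, hy]

lemma card_bsupp_inter_eq {x y : Fin M → Bool} (hx : #(bsupp x) = w) (hy : #(bsupp y) = w) :
    (#(bsupp x ∩ bsupp y) : ℝ) = w - (hammingDist x y : ℝ) / 2 := by
  have dist_add : hammingDist x y + 2 * #(bsupp x ∩ bsupp y) = 2 * w := by
    rw [hammingDist_eq_card_symmDiff_bsupp, symmDiff_def, sup_eq_union,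
      card_union_of_disjoint disjoint_sdiff_sdiff]
    have := card_sdiff_add_card_inter (bsupp x) (bsupp y)
    have := card_sdiff_add_card_inter (bsupp y) (bsupp x)
    rw [inter_comm] at this
    omega
  have : (hammingDist x y : ℝ) + 2 * #(bsupp x ∩ bsupp y) = 2 * w := by exact_mod_cast dist_add
  linarith

lemma card_bsupp_inter_le (hw : ∀ x ∈ C, #(bsupp x) = w)
    (hd : ∀ x ∈ C, ∀ y ∈ C, x ≠ y → d ≤ hammingDist x y) {x y : Fin M → Bool} (hx : x ∈ C)
    (hy : y ∈ C) (hxy : x ≠ y) : (#(bsupp x ∩ bsupp y) : ℝ) ≤ w - (d : ℝ) / 2 := by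
  rw [card_bsupp_inter_eq (hw x hx) (hw y hy)]
  gcongr
  exact hd x hx y hy hxy

lemma half_minDist_le_weight (hw : ∀ x ∈ C, #(bsupp x) = w)
    (hd : ∀ x ∈ C, ∀ y ∈ C, x ≠ y → d ≤ hammingDist x y) (hC : 1 < #C) : (d : ℝ) / 2 ≤ w := by
  obtain ⟨x, hx, y, hy, hxy⟩ := one_lt_card.1 hC
  exact sub_nonneg.1 ((Nat.cast_nonneg _).trans (card_bsupp_inter_le hw hd hx hy hxy))

lemma inf'_sum_hammingDist_div_le_expect (hC : C.Nonempty) {x : Fin M → Bool} (hx : x ∈ C) :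
    (C.inf' hC fun x ↦ ∑ y ∈ C.erase x, (hammingDist x y : ℝ)) / ((#C : ℝ) - 1) ≤
      𝔼 y ∈ C.erase x, (hammingDist x y : ℝ) := by
  rw [expect_eq_sum_div_card, ← cast_card_erase_of_mem hx]
  gcongr
  exact inf'_le (fun x ↦ ∑ y ∈ C.erase x, (hammingDist x y : ℝ)) hx

lemma expect_card_bsupp_inter_eq (hw : ∀ x ∈ C, #(bsupp x) = w) {x : Fin M → Bool} (hx : x ∈ C)
    (hC : (C.erase x).Nonempty) :
    𝔼 y ∈ C.erase x, (#(bsupp x ∩ bsupp y) : ℝ) =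
      w - (𝔼 y ∈ C.erase x, (hammingDist x y : ℝ)) / 2 := by
  rw [expect_congr rfl fun y hy ↦ card_bsupp_inter_eq (hw x hx) (hw y (mem_of_mem_erase hy)),
    expect_sub_distrib, expect_const hC, expect_div]

end ConstantWeight

lemma one_le_sqrt_two_mul_one_add {x : ℝ} (hx : 0 ≤ x) : 1 ≤ √2 * (1 + x) :=
  one_le_mul_of_one_le_of_one_le (one_le_sqrt.2 one_le_two) (le_add_of_nonneg_right hx)

lemma sqrt_mul_log_div_two_le {t x α : ℝ} (ht : 0 ≤ t) (hx : 1 ≤ x) (hα : 1 ≤ α) :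
    √(t * log x / 2) ≤ α * √(t * log (2 * x)) := by
  have log_half_le : log x / 2 ≤ log (2 * x) :=
    (half_le_self (log_nonneg hx)).trans (log_le_log (by linarith) (by linarith))
  calc
    √(t * log x / 2) ≤ √(t * log (2 * x)) := by
      rw [mul_div_assoc]
      gcongr
    _ ≤ α * √(t * log (2 * x)) := le_mul_of_one_le_left (sqrt_nonneg _) hα

/- The `/ 2` under the root corresponds to `α = 1 / √2`, the constant that the sharp form of
Hoeffding's lemma gives. -/
theorem stmt_3_general (M N w d t : ℕ) (D ε : ℝ)
    (ht : 1 ≤ t) (htN : t < N)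
    (hε0 : 0 < ε) (hε1 : ε < 1)
    (C : Finset (Fin M → Bool)) (hCN : C.card = N) (hC : C.Nonempty)
    (hw : ∀ x ∈ C, (bsupp x).card = w)
    (hd : ∀ x ∈ C, ∀ y ∈ C, x ≠ y → d ≤ hammingDist x y)
    (hD : D = (C.inf' hC fun x => ∑ y ∈ C.erase x, (hammingDist x y : ℝ)) / ((N : ℝ) - 1))
    (hcond : √((t : ℝ) * log (((N : ℝ) - (t : ℝ)) / ε) / 2)
        ≤ ((w : ℝ) - (t : ℝ) * ((w : ℝ) - D / 2)) / ((w : ℝ) - (d : ℝ) / 2)) :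
    ∃ B : Finset (Finset (Fin M → Bool)),
      (∀ S ∈ B, S ⊆ C ∧ S.card = t) ∧
      (1 - ε) * (N.choose t : ℝ) ≤ (B.card : ℝ) ∧
      ∀ S ∈ B, ∀ ν ∈ C, ν ∉ S → ¬ bsupp ν ⊆ S.biUnion bsupp := by
  subst hCN
  have htC : (t : ℝ) + 1 ≤ #C := by exact_mod_cast htN
  have hlog : 0 < log ((#C - t) / ε) := log_pos (by rw [one_lt_div hε0]; linarith)
  have hb : 0 < (w : ℝ) - d / 2 := by
    refine (sub_nonneg.2 (half_minDist_le_weight hw hd (ht.trans_lt htN))).lt_of_ne' fun hb ↦ ?_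
    rw [hb, div_zero] at hcond
    exact hcond.not_gt (by positivity)
  refine ⟨disjunctSubsets bsupp C t, fun S hS ↦ (mem_disjunctSubsets.1 hS).1,
    one_sub_mul_choose_le_card_disjunctSubsets ht htN hε0 hb
      (fun x hx y hy ↦ card_bsupp_inter_le hw hd hx hy) fun x hx ↦ ?_,
    fun S hS ↦ (mem_disjunctSubsets.1 hS).2⟩
  have erase_nonempty : (C.erase x).Nonempty :=
    (one_lt_card_iff_nontrivial.1 (ht.trans_lt htN)).erase_nonempty
  calc
    _ ≤ (w : ℝ) - t * (w - D / 2) := by rwa [mul_comm, ← le_div_iff₀ hb]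
    _ ≤ _ := by
      rw [hw x hx, expect_card_bsupp_inter_eq hw hx erase_nonempty]
      gcongr
      exact hD.trans_le (inf'_sum_hammingDist_div_le_expect hC hx)

/-- Type-1 version of Theorem 1: a constant weight binary code of length `M`, size `N`,
weight `w`, minimum distance `d` and average distance `D` yields a type-1 `(t,ε)`-disjunct
matrix provided `α·√(t·ln(2(N-t)/ε)) ≤ (w - 1 - t(w - D/2))/(w - d/2)` where
`α ≥ √2·(1 + t/(N-1))`: at least `(1-ε)·C(N,t)` of the `t`-element subsets `S` of the code
have the property that no codeword outside `S` has its support contained in the union of the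
supports of the codewords of `S`. -/
theorem stmt_3 (M N w d t : ℕ) (D α ε : ℝ)
    (ht : 1 ≤ t) (htN : t < N)
    (hε0 : 0 < ε) (hε1 : ε < 1)
    (C : Finset (Fin M → Bool)) (hCN : C.card = N) (hC : C.Nonempty)
    (hw : ∀ x ∈ C, (bsupp x).card = w)
    (hd : ∀ x ∈ C, ∀ y ∈ C, x ≠ y → d ≤ hammingDist x y)
    (hD : D = (C.inf' hC fun x => ∑ y ∈ C.erase x, (hammingDist x y : ℝ)) / ((N : ℝ) - 1))
    (hα : Real.sqrt 2 * (1 + (t : ℝ) / ((N : ℝ) - 1)) ≤ α)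
    (hcond : α * Real.sqrt ((t : ℝ) * Real.log (2 * ((N : ℝ) - (t : ℝ)) / ε))
        ≤ ((w : ℝ) - 1 - (t : ℝ) * ((w : ℝ) - D / 2)) / ((w : ℝ) - (d : ℝ) / 2)) :
    ∃ B : Finset (Finset (Fin M → Bool)),
      (∀ S ∈ B, S ⊆ C ∧ S.card = t) ∧
      (1 - ε) * (N.choose t : ℝ) ≤ (B.card : ℝ) ∧
      ∀ S ∈ B, ∀ ν ∈ C, ν ∉ S → ¬ bsupp ν ⊆ S.biUnion bsupp := by
  have htN' : (t : ℝ) + 1 ≤ N := by exact_mod_cast htN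
  have one_le_α : 1 ≤ α := (one_le_sqrt_two_mul_one_add
    (div_nonneg t.cast_nonneg (by linarith [t.cast_nonneg (α := ℝ)]))).trans hα
  have one_le_ratio : 1 ≤ ((N : ℝ) - t) / ε := by rw [one_le_div hε0]; linarith
  have half_d_le_w := half_minDist_le_weight hw hd (by omega)
  refine stmt_3_general M N w d t D ε ht htN hε0 hε1 C hCN hC hw hd hD ?_
  calc
    √(t * log ((N - t) / ε) / 2) ≤ α * √(t * log (2 * (N - t) / ε)) := by
      rw [mul_div_assoc 2]
      exact sqrt_mul_log_div_two_le t.cast_nonneg one_le_ratio one_le_α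
    _ ≤ (w - 1 - t * (w - D / 2)) / (w - d / 2) := hcond
    _ ≤ (w - t * (w - D / 2)) / (w - d / 2) :=
      div_le_div_of_nonneg_right (by linarith) (sub_nonneg.2 half_d_le_w)
end

section
/- Let C ⊆ {0,1}^M be a constant weight binary code of size N ≥ 3, weight w, minimum distance d and average distance D, let 1 ≤ t ≤ N-2 satisfy w - 1 - t(w - D/2) ≥ 0, and let (c_1, …, c_{t+1}) be a uniformly random ordered tuple of t+1 distinct codewords of C. For each i define Z^i = Σ_{j≠i, 1≤j≤t+1} (w - d_H(c_i, c_j)/2). Then Pr(∃ i ∈ {1,…,t+1} : Z^i ≥ w) ≤ 2(t+1)·exp( -(w - 1 - t(w - D/2))² / (2t·(w - d/2)²·(1 + (t-1)/(N-2))²) ). -/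
open scoped Classical

/-!
Conditionally on `c_i = x`, the other `t` entries are drawn without replacement from `C \ {x}`, and
`Z^i` is the sum of the values `w - d_H(x, y) / 2 ∈ [0, w - d / 2]` at the drawn `y`; their
population mean is at most `w - D / 2`. Removing the first drawn element `y` moves the mean of the
remaining population against the value at `y`, so the conditional exponent in the moment generating
function oscillates no more than a single draw does. Hence Hoeffding's lemma bounds the moment
generating function by that of independent draws, and a Chernoff bound and a union bound over `i`
give the exponent `-2 (w - t (w - D / 2))² / (t (w - d / 2)²)`, without the loss
`1 + (t - 1) / (N - 2)` that Azuma's inequality incurs on each martingale difference.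
-/

section

open Finset Real
open scoped BigOperators

theorem insertNth_injective_iff {α : Type*} {n : ℕ} {i : Fin (n + 1)} {y : α} {g : Fin n → α} :
    Function.Injective (i.insertNth y g : Fin (n + 1) → α) ↔
      (∀ j, g j ≠ y) ∧ Function.Injective g := by
  simp only [Function.Injective, Fin.forall_iff_succAbove i, Fin.insertNth_apply_same,
    Fin.insertNth_apply_succAbove, Fin.succAbove_right_inj, Fin.succAbove_ne,
    (Fin.succAbove_ne _ _).symm, imp_false, forall_and, forall_const, true_and,
    eq_comm (a := y), ne_eq, and_self_left]

/-- The `n`-tuples of pairwise distinct elements of `A`: the sample space of drawing `n` elements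
of `A` in order and without replacement. -/
noncomputable def injectiveTuples {α : Type*} (n : ℕ) (A : Finset α) : Finset (Fin n → α) :=
  {f ∈ Fintype.piFinset fun _ => A | Function.Injective f}

variable {α : Type*}

theorem mem_injectiveTuples {n : ℕ} {A : Finset α} {f : Fin n → α} :
    f ∈ injectiveTuples n A ↔ Function.Injective f ∧ ∀ i, f i ∈ A := by
  simp only [injectiveTuples, mem_filter, Fintype.mem_piFinset, and_comm]

theorem filter_injective_eq_injectiveTuples [Fintype α] (n : ℕ) (A : Finset α)
    [DecidablePred fun f : Fin n → α => Function.Injective f ∧ ∀ i, f i ∈ A] :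
    ({f | Function.Injective f ∧ ∀ i, f i ∈ A} : Finset (Fin n → α)) = injectiveTuples n A := by
  ext f
  simp only [mem_filter_univ, mem_injectiveTuples]

variable [DecidableEq α]

theorem insertNth_mem_injectiveTuples {n : ℕ} {A : Finset α} {i : Fin (n + 1)} {y : α}
    {g : Fin n → α} :
    (i.insertNth y g : Fin (n + 1) → α) ∈ injectiveTuples (n + 1) A ↔
      y ∈ A ∧ g ∈ injectiveTuples n (A.erase y) := by
  simp only [mem_injectiveTuples, insertNth_injective_iff, Fin.forall_iff_succAbove i,
    Fin.insertNth_apply_same, Fin.insertNth_apply_succAbove, mem_erase, forall_and]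
  tauto

theorem sum_injectiveTuples_succ {R : Type*} [AddCommMonoid R] (n : ℕ) (A : Finset α)
    (i : Fin (n + 1)) (F : (Fin (n + 1) → α) → R) :
    ∑ f ∈ injectiveTuples (n + 1) A, F f =
      ∑ y ∈ A, ∑ g ∈ injectiveTuples n (A.erase y), F (i.insertNth y g) := by
  rw [sum_sigma']
  refine sum_nbij' (fun f => ⟨f i, i.removeNth f⟩) (fun p => i.insertNth p.1 p.2) ?_ ?_ ?_ ?_ ?_
  · intro f hf
    rw [← Fin.insertNth_self_removeNth i f, insertNth_mem_injectiveTuples] at hf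
    exact mem_sigma.2 hf
  · intro p hp
    exact insertNth_mem_injectiveTuples.2 (mem_sigma.1 hp)
  · simp
  · simp
  · simp

theorem card_injectiveTuples {α : Type*} (n : ℕ) (A : Finset α) :
    #(injectiveTuples n A) = (#A).descFactorial n := by
  induction n generalizing A with
  | zero => simp [injectiveTuples, Function.injective_of_subsingleton]
  | succ n ih =>
    rw [card_eq_sum_ones, sum_injectiveTuples_succ n A 0]
    simp_rw [← card_eq_sum_ones, ih]
    rw [sum_congr rfl fun y hy => by rw [card_erase_of_mem hy], sum_const, smul_eq_mul]
    cases #A with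
    | zero => simp
    | succ m => rw [Nat.succ_descFactorial_succ, Nat.add_sub_cancel]

theorem expect_injectiveTuples_succ {K : Type*} [Semifield K] [CharZero K] (n : ℕ) (A : Finset α)
    (i : Fin (n + 1)) (F : (Fin (n + 1) → α) → K) :
    𝔼 f ∈ injectiveTuples (n + 1) A, F f =
      𝔼 y ∈ A, 𝔼 g ∈ injectiveTuples n (A.erase y), F (i.insertNth y g) := by
  have card_erase : ∀ y ∈ A,
      (#(injectiveTuples n (A.erase y)) : K) = (#A - 1).descFactorial n := fun y hy => by
    rw [card_injectiveTuples, card_erase_of_mem hy]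
  have card_succ : (#(injectiveTuples (n + 1) A) : K) = (#A - 1).descFactorial n * #A := by
    rw [card_eq_sum_ones, sum_injectiveTuples_succ n A i]
    push_cast
    simp_rw [sum_const, nsmul_one]
    rw [sum_congr rfl card_erase, sum_const, nsmul_eq_mul, mul_comm]
  simp_rw [expect_eq_sum_div_card]
  rw [sum_injectiveTuples_succ n A i, card_succ, ← div_div, sum_div]
  exact congrArg (· / _) (sum_congr rfl fun y hy => by rw [card_erase y hy])

theorem expect_exp_le_of_mem_Icc {β : Type*} {A : Finset β} {f : β → ℝ} {a b : ℝ}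
    (hf : ∀ y ∈ A, f y ∈ Set.Icc a b) :
    𝔼 y ∈ A, exp (f y) ≤ exp (𝔼 y ∈ A, f y + (b - a) ^ 2 / 8) := by
  rcases A.eq_empty_or_nonempty with rfl | hA
  · simpa using (exp_pos _).le
  have : Nonempty A := hA.to_subtype
  let : MeasurableSpace A := ⊤
  set μ := (PMF.uniformOfFintype A).toMeasure
  have integral_eq (F : β → ℝ) : ∫ y : A, F y ∂μ = 𝔼 y ∈ A, F y := by
    rw [PMF.integral_eq_sum, expect_eq_sum_div_card, ← sum_coe_sort A, sum_div]
    simp [div_eq_inv_mul]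
  have hoeffding := (ProbabilityTheory.hasSubgaussianMGF_of_mem_Icc (μ := μ)
    (X := fun y : A => f y) (measurable_of_finite _).aemeasurable
    (.of_forall fun y => hf y y.2)).mgf_le 1
  rw [integral_eq, ProbabilityTheory.mgf, integral_eq fun y => exp (1 * (f y - 𝔼 y ∈ A, f y))]
    at hoeffding
  calc 𝔼 y ∈ A, exp (f y)
      = exp (𝔼 y ∈ A, f y) * 𝔼 y ∈ A, exp (1 * (f y - 𝔼 y ∈ A, f y)) := by
        simp_rw [mul_expect, ← exp_add, one_mul, add_sub_cancel]
    _ ≤ exp (𝔼 y ∈ A, f y) * exp ((b - a) ^ 2 / 8) := by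
        refine mul_le_mul_of_nonneg_left (hoeffding.trans_eq ?_) (exp_pos _).le
        congr 1
        push_cast
        rw [div_pow, norm_eq_abs, sq_abs]
        ring
    _ = exp (𝔼 y ∈ A, f y + (b - a) ^ 2 / 8) := (exp_add _ _).symm

theorem expect_erase {K : Type*} [Field K] [CharZero K] {A : Finset α} {y : α} (hy : y ∈ A)
    (f : α → K) :
    𝔼 z ∈ A.erase y, f z = (#A * 𝔼 z ∈ A, f z - f y) / (#A - 1) := by
  rw [expect_eq_sum_div_card, sum_erase_eq_sub hy, card_mul_expect, cast_card_erase_of_mem hy]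

theorem expect_exp_add_mul_expect_erase_le {A : Finset α} {f : α → ℝ} {a b : ℝ}
    (hf : ∀ y ∈ A, f y ∈ Set.Icc a b) {t : ℕ} (ht : t < #A) :
    𝔼 y ∈ A, exp (f y + t * 𝔼 z ∈ A.erase y, f z) ≤
      exp ((t + 1) * 𝔼 y ∈ A, f y + (b - a) ^ 2 / 8) := by
  obtain ⟨m, hm⟩ : ∃ m, #A = m + 1 := ⟨#A - 1, by omega⟩
  have hA : A.Nonempty := card_pos.1 (by omega)
  have htm : t ≤ m := by omega
  -- The exponent is affine in `f y` with slope `κ ∈ [0, 1]`, so its oscillation is at most `b - a`.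
  set κ : ℝ := 1 - t / m with hκ
  set c : ℝ := t * ((m + 1) * 𝔼 z ∈ A, f z) / m with hc
  have hκ0 : 0 ≤ κ := sub_nonneg.2 (div_le_one_of_le₀ (by exact_mod_cast htm) m.cast_nonneg)
  have hκ1 : κ ≤ 1 := sub_le_self _ (by positivity)
  have exponent_eq : ∀ y ∈ A, f y + t * 𝔼 z ∈ A.erase y, f z = κ * f y + c := by
    intro y hy
    rw [expect_erase hy, hm, hκ, hc]
    push_cast
    ring
  have mean_eq : κ * 𝔼 y ∈ A, f y + c = (t + 1) * 𝔼 y ∈ A, f y := by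
    rcases m.eq_zero_or_pos with rfl | hm0
    · simp [hκ, hc, Nat.le_zero.1 htm]
    · rw [hκ, hc]
      field_simp
      ring
  have range_mem : ∀ y ∈ A, κ * f y + c ∈ Set.Icc (κ * a + c) (κ * b + c) := fun y hy =>
    ⟨by gcongr; exact (hf y hy).1, by gcongr; exact (hf y hy).2⟩
  calc 𝔼 y ∈ A, exp (f y + t * 𝔼 z ∈ A.erase y, f z)
      = 𝔼 y ∈ A, exp (κ * f y + c) := expect_congr rfl fun y hy => by rw [exponent_eq y hy]
    _ ≤ exp (𝔼 y ∈ A, (κ * f y + c) + (κ * b + c - (κ * a + c)) ^ 2 / 8) :=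
        expect_exp_le_of_mem_Icc range_mem
    _ = exp ((t + 1) * 𝔼 y ∈ A, f y + κ ^ 2 * (b - a) ^ 2 / 8) := by
        rw [expect_add_distrib, ← mul_expect, expect_const hA, mean_eq]
        ring_nf
    _ ≤ exp ((t + 1) * 𝔼 y ∈ A, f y + (b - a) ^ 2 / 8) := by
        gcongr
        exact mul_le_of_le_one_left (sq_nonneg _) (pow_le_one₀ hκ0 hκ1)

theorem expect_exp_sum_injectiveTuples_le {α : Type*} {A : Finset α} {f : α → ℝ} {a b : ℝ}
    (hf : ∀ y ∈ A, f y ∈ Set.Icc a b) (t : ℕ) :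
    𝔼 g ∈ injectiveTuples t A, exp (∑ j, f (g j)) ≤
      exp (t * (𝔼 y ∈ A, f y + (b - a) ^ 2 / 8)) := by
  induction t generalizing A with
  | zero =>
    have : injectiveTuples 0 A = univ := by
      simp [injectiveTuples, Function.injective_of_subsingleton]
    simp [this]
  | succ t ih =>
    rcases le_or_gt #A t with hAt | hAt
    · have : injectiveTuples (t + 1) A = ∅ := by
        rw [← card_eq_zero, card_injectiveTuples, Nat.descFactorial_eq_zero_iff_lt]
        omega
      simpa [this] using (exp_pos _).le
    set v := (b - a) ^ 2 / 8
    calc 𝔼 g ∈ injectiveTuples (t + 1) A, exp (∑ j, f (g j))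
        = 𝔼 y ∈ A, exp (f y) * 𝔼 g ∈ injectiveTuples t (A.erase y), exp (∑ j, f (g j)) := by
          simp_rw [expect_injectiveTuples_succ t A 0, mul_expect, ← exp_add,
            Fin.sum_univ_succAbove _ 0, Fin.insertNth_apply_same, Fin.insertNth_apply_succAbove]
      _ ≤ 𝔼 y ∈ A, exp (f y) * exp (t * (𝔼 z ∈ A.erase y, f z + v)) := by
          gcongr
          exact ih fun z hz => hf z (mem_of_mem_erase hz)
      _ = exp (t * v) * 𝔼 y ∈ A, exp (f y + t * 𝔼 z ∈ A.erase y, f z) := by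
          rw [mul_expect]
          refine expect_congr rfl fun y _ => ?_
          rw [← exp_add, ← exp_add]
          ring_nf
      _ ≤ exp (t * v) * exp ((t + 1) * 𝔼 y ∈ A, f y + v) := by
          gcongr
          exact expect_exp_add_mul_expect_erase_le hf hAt
      _ = exp ((t + 1 : ℕ) * (𝔼 y ∈ A, f y + v)) := by
          rw [← exp_add]
          push_cast
          ring_nf

theorem expect_exp_sum_erase_le {C : Finset α} {ρ : α → α → ℝ} {a b m : ℝ}
    (hρ : ∀ x ∈ C, ∀ y ∈ C, x ≠ y → ρ x y ∈ Set.Icc a b)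
    (hm : ∀ x ∈ C, 𝔼 y ∈ C.erase x, ρ x y ≤ m) {t : ℕ} (i : Fin (t + 1)) :
    𝔼 f ∈ injectiveTuples (t + 1) C, exp (∑ j ∈ univ.erase i, ρ (f i) (f j)) ≤
      exp (t * (m + (b - a) ^ 2 / 8)) := by
  rcases C.eq_empty_or_nonempty with rfl | hC
  · simpa [expect_injectiveTuples_succ t ∅ i] using (exp_pos _).le
  rw [expect_injectiveTuples_succ t C i]
  refine expect_le hC fun x hx => ?_
  have sum_erase (g : Fin t → α) : ∑ j ∈ univ.erase i,
      ρ ((i.insertNth x g : Fin (t + 1) → α) i) ((i.insertNth x g : Fin (t + 1) → α) j) =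
        ∑ j, ρ x (g j) := by
    simp [sum_erase_eq_sub, Fin.sum_univ_succAbove _ i]
  simp_rw [sum_erase]
  have range_mem : ∀ y ∈ C.erase x, ρ x y ∈ Set.Icc a b := fun y hy =>
    hρ x hx y (mem_of_mem_erase hy) (ne_of_mem_erase hy).symm
  refine (expect_exp_sum_injectiveTuples_le range_mem t).trans ?_
  gcongr
  exact hm x hx

theorem card_filter_le_div_card_le_expect_exp {β : Type*} (A : Finset β) (X : β → ℝ) (τ : ℝ)
    {s : ℝ} (hs : 0 ≤ s) :
    (#{x ∈ A | τ ≤ X x} : ℝ) / #A ≤ 𝔼 x ∈ A, exp (s * (X x - τ)) := by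
  rw [card_filter, Nat.cast_sum, ← expect_eq_sum_div_card]
  refine expect_le_expect fun x _ => ?_
  split_ifs with h
  · simpa using mul_nonneg hs (sub_nonneg.2 h)
  · simpa using (exp_pos _).le

theorem neg_mul_add_sq_mul_div_eight (x v : ℝ) :
    -(4 * x / v * x) + (4 * x / v) ^ 2 * v / 8 = -(2 * x ^ 2 / v) := by
  rcases eq_or_ne v 0 with rfl | hv
  · simp
  · field_simp
    ring

theorem card_filter_le_sum_erase_div_card_le {C : Finset α} {ρ : α → α → ℝ} {a b m τ : ℝ}
    (hρ : ∀ x ∈ C, ∀ y ∈ C, x ≠ y → ρ x y ∈ Set.Icc a b)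
    (hm : ∀ x ∈ C, 𝔼 y ∈ C.erase x, ρ x y ≤ m) {t : ℕ} (hτ : 0 ≤ τ - t * m) (i : Fin (t + 1)) :
    (#{f ∈ injectiveTuples (t + 1) C | τ ≤ ∑ j ∈ univ.erase i, ρ (f i) (f j)} : ℝ) /
        #(injectiveTuples (t + 1) C) ≤
      exp (-(2 * (τ - t * m) ^ 2 / (t * (b - a) ^ 2))) := by
  -- the minimiser over `s` of the exponent `-s (τ - t m) + s² t (b - a)² / 8`
  set s := 4 * (τ - t * m) / (t * (b - a) ^ 2) with hs
  have hs0 : 0 ≤ s := by positivity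
  have scaled_mem : ∀ x ∈ C, ∀ y ∈ C, x ≠ y → s * ρ x y ∈ Set.Icc (s * a) (s * b) :=
    fun x hx y hy hxy => ⟨mul_le_mul_of_nonneg_left (hρ x hx y hy hxy).1 hs0,
      mul_le_mul_of_nonneg_left (hρ x hx y hy hxy).2 hs0⟩
  have scaled_mean : ∀ x ∈ C, 𝔼 y ∈ C.erase x, s * ρ x y ≤ s * m := fun x hx => by
    rw [← mul_expect]
    exact mul_le_mul_of_nonneg_left (hm x hx) hs0
  calc _ ≤ 𝔼 f ∈ injectiveTuples (t + 1) C,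
          exp (s * (∑ j ∈ univ.erase i, ρ (f i) (f j) - τ)) :=
        card_filter_le_div_card_le_expect_exp _ _ τ hs0
    _ = exp (-(s * τ)) * 𝔼 f ∈ injectiveTuples (t + 1) C,
          exp (∑ j ∈ univ.erase i, s * ρ (f i) (f j)) := by
        simp_rw [mul_expect, ← exp_add, ← mul_sum, mul_sub, sub_eq_neg_add]
    _ ≤ exp (-(s * τ)) * exp (t * (s * m + (s * b - s * a) ^ 2 / 8)) := by
        gcongr
        exact expect_exp_sum_erase_le scaled_mem scaled_mean i
    _ = exp (-(s * (τ - t * m)) + s ^ 2 * (t * (b - a) ^ 2) / 8) := by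
        rw [← exp_add]
        ring_nf
    _ = exp (-(2 * (τ - t * m) ^ 2 / (t * (b - a) ^ 2))) := by
        rw [hs, neg_mul_add_sq_mul_div_eight]

theorem card_filter_exists_le_sum {ι β : Type*} [Fintype ι] (A : Finset β) (P : ι → β → Prop)
    [∀ i, DecidablePred (P i)] [DecidablePred fun x => ∃ i, P i x] :
    #{x ∈ A | ∃ i, P i x} ≤ ∑ i, #{x ∈ A | P i x} := by
  have : {x ∈ A | ∃ i, P i x} = univ.biUnion fun i => {x ∈ A | P i x} := by
    ext x
    simp
  exact this ▸ card_biUnion_le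

theorem card_filter_exists_le_sum_erase_div_card_le {C : Finset α} {ρ : α → α → ℝ} {a b m τ : ℝ}
    (hρ : ∀ x ∈ C, ∀ y ∈ C, x ≠ y → ρ x y ∈ Set.Icc a b)
    (hm : ∀ x ∈ C, 𝔼 y ∈ C.erase x, ρ x y ≤ m) {t : ℕ} (hτ : 0 ≤ τ - t * m) :
    (#{f ∈ injectiveTuples (t + 1) C | ∃ i, τ ≤ ∑ j ∈ univ.erase i, ρ (f i) (f j)} : ℝ) /
        #(injectiveTuples (t + 1) C) ≤
      (t + 1) * exp (-(2 * (τ - t * m) ^ 2 / (t * (b - a) ^ 2))) := by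
  set T := injectiveTuples (t + 1) C
  calc _ ≤ (∑ i, #{f ∈ T | τ ≤ ∑ j ∈ univ.erase i, ρ (f i) (f j)} : ℝ) / #T := by
        gcongr
        exact_mod_cast card_filter_exists_le_sum T
          fun i f => τ ≤ ∑ j ∈ univ.erase i, ρ (f i) (f j)
    _ ≤ ∑ _i : Fin (t + 1), exp (-(2 * (τ - t * m) ^ 2 / (t * (b - a) ^ 2))) := by
        rw [sum_div]
        exact sum_le_sum fun i _ => card_filter_le_sum_erase_div_card_le hρ hm hτ i
    _ = (t + 1) * exp (-(2 * (τ - t * m) ^ 2 / (t * (b - a) ^ 2))) := by simp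

theorem hammingDist_le_two_mul {M w : ℕ} {x y : Fin M → Bool} (hx : #(bsupp x) = w)
    (hy : #(bsupp y) = w) : hammingDist x y ≤ 2 * w := by
  have card_bsupp (z : Fin M → Bool) : #(bsupp z) = hammingDist z fun _ => false := by
    simp [bsupp, hammingDist]
  rw [two_mul, ← congrArg₂ (· + ·) hx hy, card_bsupp, card_bsupp]
  exact hammingDist_triangle_right x y _

theorem inf'_sum_erase_div_le_expect_erase {C : Finset α}
    (hC : C.Nonempty) (δ : α → α → ℝ) {x : α} (hx : x ∈ C) :
    (C.inf' hC fun x => ∑ y ∈ C.erase x, δ x y) / ((#C : ℝ) - 1) ≤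
      𝔼 y ∈ C.erase x, δ x y := by
  rw [expect_eq_sum_div_card, cast_card_erase_of_mem hx]
  have : (1 : ℝ) ≤ #C := by exact_mod_cast hC.card_pos
  exact div_le_div_of_nonneg_right (inf'_le _ hx) (sub_nonneg.2 this)

theorem hoeffding_bound_le_azuma_bound {w m B t N : ℝ} (ht : 1 ≤ t) (hN : 2 ≤ N)
    (hw : 0 ≤ w - 1 - t * m) :
    (t + 1) * exp (-(2 * (w - t * m) ^ 2 / (t * B ^ 2))) ≤
      2 * (t + 1) * exp (-((w - 1 - t * m) ^ 2 /
        (2 * t * B ^ 2 * (1 + (t - 1) / (N - 2)) ^ 2))) := by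
  set R := 1 + (t - 1) / (N - 2)
  have hR : 1 ≤ R := le_add_of_nonneg_right (div_nonneg (by linarith) (by linarith))
  have numerator_le : (w - 1 - t * m) ^ 2 / (2 * R ^ 2) ≤ 2 * (w - t * m) ^ 2 := by
    refine (div_le_self (sq_nonneg _) (by nlinarith)).trans ?_
    nlinarith
  have exponent_le : (w - 1 - t * m) ^ 2 / (2 * t * B ^ 2 * R ^ 2) ≤
      2 * (w - t * m) ^ 2 / (t * B ^ 2) := by
    calc _ = (w - 1 - t * m) ^ 2 / (2 * R ^ 2) / (t * B ^ 2) := by rw [div_div]; ring_nf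
      _ ≤ _ := by gcongr
  gcongr
  linarith

theorem stmt_7_general {C : Finset α} {t : ℕ} (ht : 1 ≤ t) (htC : t + 1 ≤ #C)
    {δ : α → α → ℝ} {w d D : ℝ}
    (hd : ∀ x ∈ C, ∀ y ∈ C, x ≠ y → δ x y ∈ Set.Icc d (2 * w))
    (hD : ∀ x ∈ C, D ≤ 𝔼 y ∈ C.erase x, δ x y) (hwtD : 0 ≤ w - t * (w - D / 2)) :
    (#{f ∈ injectiveTuples (t + 1) C |
        ∃ i, w ≤ ∑ j ∈ univ.erase i, (w - δ (f i) (f j) / 2)} : ℝ) /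
        #(injectiveTuples (t + 1) C) ≤
      (t + 1) * exp (-(2 * (w - t * (w - D / 2)) ^ 2 / (t * (w - d / 2) ^ 2))) := by
  have hC : C.Nontrivial := one_lt_card_iff_nontrivial.1 (by omega)
  have range_mem : ∀ x ∈ C, ∀ y ∈ C, x ≠ y → w - δ x y / 2 ∈ Set.Icc 0 (w - d / 2) :=
    fun x hx y hy hxy => ⟨by linarith [(hd x hx y hy hxy).2], by linarith [(hd x hx y hy hxy).1]⟩
  have mean_le : ∀ x ∈ C, 𝔼 y ∈ C.erase x, (w - δ x y / 2) ≤ w - D / 2 := fun x hx => by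
    rw [expect_sub_distrib, expect_const hC.erase_nonempty, ← expect_div]
    linarith [hD x hx]
  simpa only [sub_zero] using card_filter_exists_le_sum_erase_div_card_le range_mem mean_le hwtD

end

/-- Azuma-type bound: for a uniformly random ordered tuple `(c_1, …, c_{t+1})` of `t+1`
distinct codewords of a constant weight code `C` of size `N ≥ 3`, weight `w`, minimum distance
at least `d` and average distance `D`, with `Z^i = Σ_{j≠i} (w - d_H(c_i,c_j)/2)` and
`w - 1 - t(w - D/2) ≥ 0`, the probability that some `Z^i ≥ w` is at most
`2(t+1)·exp(-(w-1-t(w-D/2))² / (2t(w-d/2)²(1+(t-1)/(N-2))²))`. -/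
theorem stmt_7 (M N w d t : ℕ) (D : ℝ) (hN : 3 ≤ N) (ht : 1 ≤ t) (htN : t + 2 ≤ N)
    (C : Finset (Fin M → Bool)) (hCN : C.card = N) (hC : C.Nonempty)
    (hw : ∀ x ∈ C, (bsupp x).card = w)
    (hd : ∀ x ∈ C, ∀ y ∈ C, x ≠ y → d ≤ hammingDist x y)
    (hD : D = (C.inf' hC fun x => ∑ y ∈ C.erase x, (hammingDist x y : ℝ)) / ((N : ℝ) - 1))
    (hwtD : 0 ≤ (w : ℝ) - 1 - (t : ℝ) * ((w : ℝ) - D / 2)) :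
    let T := (Finset.univ : Finset (Fin (t + 1) → Fin M → Bool)).filter
      fun f => Function.Injective f ∧ ∀ i, f i ∈ C
    let bad := T.filter fun f => ∃ i : Fin (t + 1),
      (w : ℝ) ≤ ∑ j ∈ Finset.univ.erase i, ((w : ℝ) - (hammingDist (f i) (f j) : ℝ) / 2)
    (bad.card : ℝ) / (T.card : ℝ) ≤
      2 * ((t : ℝ) + 1) *
        Real.exp (-(((w : ℝ) - 1 - (t : ℝ) * ((w : ℝ) - D / 2)) ^ 2 /
          (2 * (t : ℝ) * ((w : ℝ) - (d : ℝ) / 2) ^ 2 *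
            (1 + ((t : ℝ) - 1) / ((N : ℝ) - 2)) ^ 2))) := by
  intro T bad
  subst hCN
  simp only [bad, T, filter_injective_eq_injectiveTuples]
  exact (stmt_7_general (δ := fun x y => (hammingDist x y : ℝ)) ht (by omega)
    (fun x hx y hy hxy =>
      ⟨mod_cast hd x hx y hy hxy, mod_cast hammingDist_le_two_mul (hw x hx) (hw y hy)⟩)
    (fun x hx => hD.trans_le (inf'_sum_erase_div_le_expect_erase hC _ hx)) (by linarith)).trans
    (hoeffding_bound_le_azuma_bound (mod_cast ht) (mod_cast (by omega : 2 ≤ C.card)) hwtD)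
end

section
/- Let q be a prime power, let 2 ≤ k < q, and let C' ⊆ F_q^{q-1} be the Reed-Solomon code of dimension k obtained by evaluating all polynomials over F_q of degree less than k at the q-1 nonzero field elements (so C' has size N = q^k and minimum distance q - k). Let C ⊆ {0,1}^{q(q-1)} be the binary constant weight code obtained from C' by replacing each q-ary symbol by its length-q unit-weight indicator vector. Then the q(q-1) × q^k binary matrix whose columns are the codewords of C is t-disjunct for t = ⌊(q-2)/(k-1)⌋. -/
/-!
Two distinct polynomials of degree `< k` agree at no more than `k - 1` points, so `t` polynomials
other than `p` account for at most `t (k - 1)` of the rows in which the column of `p` has a one.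
That column has a one for each evaluation point, so a row is left over as soon as `t (k - 1)` is
smaller than the number of evaluation points.
-/

open Finset Polynomial

variable {ι α β γ R : Type*}

/-- The indicator (concatenation) map on words: the symbol `c i` is replaced by the unit-weight
vector `fun a => decide (c i = a)`, and the coordinate `a` of block `i` is indexed by `(i, a)`. -/
def indicatorWord [DecidableEq α] (c : ι → α) : ι × α → Bool :=
  fun z => decide (c z.1 = z.2)

/-- The `t`-disjunctness of the binary matrix with columns `col j` for `j ∈ C`: no column has its
support covered by at most `t` others. Columns are told apart by their labels, and `C` is a set in
an ambient `γ` so that the columns of a code can be labelled by arbitrary polynomials. -/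
def IsDisjunctOn (col : γ → β → Bool) (C : Set γ) (t : ℕ) : Prop :=
  ∀ j ∈ C, ∀ S : Finset γ, (∀ j' ∈ S, j' ∈ C) → j ∉ S → #S ≤ t →
    ¬ {r | col j r = true} ⊆ ⋃ j' ∈ S, {r | col j' r = true}

theorem card_filter_eq_add_hammingDist [Fintype ι] [DecidableEq α] (x y : ι → α) :
    #{i | x i = y i} + hammingDist x y = Fintype.card ι :=
  card_filter_add_card_filter_not _

theorem exists_forall_ne_of_card_mul_lt [Fintype ι] [DecidableEq α] {c : ι → α} {w : γ → ι → α}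
    {S : Finset γ} {m : ℕ} (hdist : ∀ j ∈ S, Fintype.card ι ≤ hammingDist c (w j) + m)
    (hm : #S * m < Fintype.card ι) : ∃ i, ∀ j ∈ S, c i ≠ w j i := by
  classical
  have hagree : #(S.biUnion fun j => {i | c i = w j i}) ≤ #S * m :=
    card_biUnion_le_card_mul _ _ _ fun j hj => by
      have := card_filter_eq_add_hammingDist c (w j)
      have := hdist j hj
      omega
  obtain ⟨i, -, hi⟩ := exists_mem_notMem_of_card_lt_card (hagree.trans_lt hm)
  exact ⟨i, by simpa using hi⟩

theorem isDisjunctOn_indicatorWord [Fintype ι] [DecidableEq α] {w : γ → ι → α} {C : Set γ}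
    {m t : ℕ} (hdist : C.Pairwise fun j j' => Fintype.card ι ≤ hammingDist (w j) (w j') + m)
    (ht : t * m < Fintype.card ι) :
    IsDisjunctOn (fun j => indicatorWord (w j)) C t := by
  intro j hj S hS hjS hcard hsub
  obtain ⟨i, hi⟩ : ∃ i, ∀ j' ∈ S, w j i ≠ w j' i :=
    exists_forall_ne_of_card_mul_lt
      (fun j' hj' => hdist hj (hS j' hj') (ne_of_mem_of_not_mem hj' hjS).symm)
      ((Nat.mul_le_mul_right m hcard).trans_lt ht)
  have hcovered : ∃ j' ∈ S, w j' i = w j i := by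
    simpa [indicatorWord] using hsub (show (i, w j i) ∈ _ by simp [indicatorWord])
  obtain ⟨j', hj', heq⟩ := hcovered
  exact hi j' hj' heq.symm

section ReedSolomon

variable [Fintype ι] [CommRing R] [IsDomain R] [DecidableEq R] {x : ι → R}

theorem card_filter_eval_eq_le_natDegree_sub (hx : x.Injective) {p p' : R[X]} (hne : p ≠ p') :
    #{i | p.eval (x i) = p'.eval (x i)} ≤ (p - p').natDegree := by
  rw [← card_image_of_injective _ hx]
  refine card_le_degree_of_subset_roots fun a ha => ?_
  obtain ⟨i, hi, rfl⟩ : ∃ i, p.eval (x i) = p'.eval (x i) ∧ x i = a := by simpa using ha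
  simp [sub_ne_zero.mpr hne, hi]

theorem card_lt_hammingDist_eval_add (hx : x.Injective) {p p' : R[X]} {k : ℕ}
    (hp : p.degree < k) (hp' : p'.degree < k) (hne : p ≠ p') :
    Fintype.card ι < hammingDist (fun i => p.eval (x i)) (fun i => p'.eval (x i)) + k := by
  have hdeg : (p - p').natDegree < k :=
    (natDegree_lt_iff_degree_lt (sub_ne_zero.mpr hne)).mpr
      ((degree_sub_le p p').trans_lt (max_lt hp hp'))
  have hagree := card_filter_eval_eq_le_natDegree_sub hx hne
  have := card_filter_eq_add_hammingDist (fun i => p.eval (x i)) (fun i => p'.eval (x i))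
  omega

theorem stmt_17_general (hx : x.Injective) {k t : ℕ} (ht : t * (k - 1) < Fintype.card ι) :
    IsDisjunctOn (fun p : R[X] => indicatorWord fun i => p.eval (x i)) {p | p.degree < k} t :=
  isDisjunctOn_indicatorWord
    (fun _ hp _ hp' hne => by
      have := card_lt_hammingDist_eval_add hx hp hp' hne
      omega)
    ht

end ReedSolomon

theorem div_mul_lt_card_subtype_ne [Fintype α] [DecidableEq α] [Nontrivial α] (a : α) (m : ℕ) :
    (Fintype.card α - 2) / m * m < Fintype.card {b : α // b ≠ a} := by
  have hcard : Fintype.card {b : α // b ≠ a} = Fintype.card α - 1 := by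
    simp [Fintype.card_subtype_compl]
  have := Fintype.one_lt_card (α := α)
  have := Nat.div_mul_le_self (Fintype.card α - 2) m
  omega

/-- The Kautz–Singleton construction: concatenating the Reed–Solomon code of dimension `k`
(polynomials of degree `< k` over a finite field `F` with `q` elements, `2 ≤ k < q`, evaluated
at the `q-1` nonzero field elements) with the unit-weight indicator map yields a binary
constant weight code whose codeword matrix is `t`-disjunct for `t = ⌊(q-2)/(k-1)⌋`: the
support of the binary codeword of a polynomial `p` of degree `< k` is never contained in the
union of the supports of the binary codewords of at most `⌊(q-2)/(k-1)⌋` other polynomials of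
degree `< k`. -/
theorem stmt_17 (q k : ℕ) (F : Type) [Field F] [Fintype F] [DecidableEq F]
    (hq : Fintype.card F = q) (hk2 : 2 ≤ k) (hkq : k < q) :
    let cw : Polynomial F → ({a : F // a ≠ 0} × F → Bool) :=
      fun p z => decide (Polynomial.eval (z.1 : F) p = z.2)
    let suppB : ({a : F // a ≠ 0} × F → Bool) → Finset ({a : F // a ≠ 0} × F) :=
      fun g => Finset.univ.filter fun z => g z = true
    ∀ p : Polynomial F, p.degree < (k : ℕ) →
      ∀ S : Finset (Polynomial F), (∀ p' ∈ S, p'.degree < (k : ℕ)) →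
        p ∉ S → S.card ≤ (q - 2) / (k - 1) →
        ¬ suppB (cw p) ⊆ S.biUnion fun p' => suppB (cw p') := by
  intro cw suppB p hp S hS hpS hcard hsub
  subst hq
  exact stmt_17_general Subtype.val_injective (div_mul_lt_card_subtype_ne 0 _) p hp S hS hpS hcard
    (by simpa [indicatorWord, cw, suppB, ← coe_subset] using hsub)
end

section
/- For every constant a > 1 there exist a constant C > 0 and an integer t_0 such that for all integers t ≥ t_0, all N > t, and all ε with 2(t+1)·e^{-at} < ε < 1, there exists an M×N binary matrix that is type-2 (t,ε)-disjunct with M ≤ C · t^{3/2} · ln N · √(ln(2(t+1)/ε)) / (ln t − ln ln(2(t+1)/ε) + ln(4a)). -/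
/-!
Colour the columns in each row independently and uniformly with `t + 1` colours, and put a `1`
wherever the colour is `0`. A row isolates a given column among `t + 1` given ones with
probability `(1 - 1/(t+1))^t / (t+1) ≥ 1 / (e (t+1))`, so with `M` rows all `t + 1` columns get
isolated except with probability at most `(t+1) exp (-M / (e (t+1)))`. This is at most `ε` for
some `M ≤ 2 e t L`, where `L = log (2 (t+1) / ε)`, and some matrix does as well as the average.

This bound is linear in `L` and independent of `N`. It implies the required one
because `log x ≤ 2 √x` at `x = 4 a t / L` gives `L log (4 a t / L) ≤ 4 √(a t L)`.
-/

section

open Finset Real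

theorem exists_card_filter_le_mul_card {Ω β : Type*} [Fintype Ω] [Nonempty Ω] (s : Finset β)
    (P : Ω → β → Prop) [∀ ω, DecidablePred (P ω)] {δ : ℝ}
    (hP : ∀ b ∈ s, (#{ω | P ω b} : ℝ) ≤ δ * Fintype.card Ω) :
    ∃ ω, (#{b ∈ s | P ω b} : ℝ) ≤ δ * #s := by
  have double_count : ∑ ω, (#{b ∈ s | P ω b} : ℝ) = ∑ b ∈ s, (#{ω | P ω b} : ℝ) := by
    exact_mod_cast sum_card_bipartiteAbove_eq_sum_card_bipartiteBelow P
  have total_le : ∑ ω, (#{b ∈ s | P ω b} : ℝ) ≤ ∑ _ω : Ω, δ * #s := by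
    calc ∑ ω, (#{b ∈ s | P ω b} : ℝ) = ∑ b ∈ s, (#{ω | P ω b} : ℝ) := double_count
      _ ≤ ∑ _b ∈ s, δ * Fintype.card Ω := sum_le_sum hP
      _ = ∑ _ω : Ω, δ * #s := by
        simp only [sum_const, card_univ, nsmul_eq_mul]
        ring
  obtain ⟨ω, -, hω⟩ := exists_le_of_sum_le univ_nonempty total_le
  exact ⟨ω, hω⟩

theorem add_one_pow_le_exp_one_mul_pow {m t : ℕ} (hmt : m ≤ t) :
    ((t : ℝ) + 1) ^ m ≤ exp 1 * (t : ℝ) ^ m := by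
  rcases t.eq_zero_or_pos with rfl | ht
  · obtain rfl : m = 0 := by omega
    simp
  · have ht' : (0 : ℝ) < t := by exact_mod_cast ht
    calc ((t : ℝ) + 1) ^ m = (1 + (t : ℝ)⁻¹) ^ m * (t : ℝ) ^ m := by
          rw [← mul_pow]
          congr 1
          field_simp
      _ ≤ (1 + (t : ℝ)⁻¹) ^ t * (t : ℝ) ^ m := by
          gcongr
          linarith [inv_pos.2 ht']
      _ ≤ exp 1 * (t : ℝ) ^ m := by
          gcongr
          exact one_add_inv_pow_le_exp

theorem mul_log_div_le_two_mul_sqrt {x y : ℝ} (hx : 0 ≤ x) (hy : 0 ≤ y) :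
    y * log (x / y) ≤ 2 * √(x * y) := by
  calc y * log (x / y) ≤ y * (2 * √(x / y)) := by
        gcongr
        have log_le := log_le_rpow_div (div_nonneg hx hy) one_half_pos
        rw [← sqrt_eq_rpow] at log_le
        linarith
    _ = 2 * √(x * y) := by
        rcases hy.eq_or_lt with rfl | hy
        · simp
        · rw [sqrt_div' _ hy.le, sqrt_mul hx, mul_div_assoc', mul_div_assoc',
            div_eq_iff (sqrt_pos.2 hy).ne']
          linear_combination (-2 * √x) * mul_self_sqrt hy.le

theorem log_div_lt_of_mul_exp_neg_lt {x y z : ℝ} (hx : 0 < x) (h : x * exp (-y) < z) :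
    log (x / z) < y := by
  have hz : 0 < z := (by positivity : 0 < x * exp (-y)).trans h
  rw [log_lt_iff_lt_exp (by positivity), div_lt_iff₀ hz]
  rwa [exp_neg, mul_inv_lt_iff₀ (exp_pos y), mul_comm] at h

variable {ρ α κ : Type*}

/-- The binary row `v` isolates the column `j` within the set `S` of columns: `v` is `1` at `j`
and `0` at the other columns of `S`. -/
def Isolates (v : α → Bool) (S : Finset α) (j : α) : Prop :=
  v j = true ∧ ∀ j' ∈ S, j' ≠ j → v j' = false

instance [DecidableEq α] (v : α → Bool) (S : Finset α) (j : α) : Decidable (Isolates v S j) :=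
  inferInstanceAs (Decidable (_ ∧ _))

/-- The columns of `A` indexed by `S` contain a permutation matrix: each of them is isolated
within `S` by some row of `A`. -/
def Separates (A : ρ → α → Bool) (S : Finset α) : Prop :=
  ∀ j ∈ S, ∃ r, Isolates (A r) S j

instance [Fintype ρ] [DecidableEq α] (A : ρ → α → Bool) (S : Finset α) :
    Decidable (Separates A S) :=
  inferInstanceAs (Decidable (∀ j ∈ S, _))

/-- Type-2 `(t, ε)`-disjunctness of a binary matrix: all but a proportion `ε` of the
`(t + 1)`-element sets of columns contain a permutation matrix. -/
def IsTypeTwoDisjunct [Fintype ρ] [Fintype α] [DecidableEq α] (t : ℕ) (ε : ℝ)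
    (A : ρ → α → Bool) : Prop :=
  (1 - ε) * (Fintype.card α).choose (t + 1) ≤
    (#{S ∈ powersetCard (t + 1) (univ : Finset α) | Separates A S} : ℝ)

/-- The indicator row of the columns to which `f` gives the colour `c`. For a uniformly random
colouring its entries are independent and equal to `1` with probability `1 / card κ`. -/
def colorRow [DecidableEq κ] (c : κ) (f : α → κ) : α → Bool := fun j => decide (f j = c)

theorem isolates_colorRow_iff [DecidableEq κ] {c : κ} {f : α → κ} {S : Finset α} {j : α} :
    Isolates (colorRow c f) S j ↔ f j = c ∧ ∀ j' ∈ S, j' ≠ j → f j' ≠ c := by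
  simp only [Isolates, colorRow, decide_eq_true_eq, decide_eq_false_iff_not, ne_eq]

variable [Fintype α] [DecidableEq α]

theorem card_filter_isolates_colorRow [Fintype κ] [DecidableEq κ] (c : κ) {S : Finset α} {j : α}
    (hj : j ∈ S) :
    #{f : α → κ | Isolates (colorRow c f) S j} =
      (Fintype.card κ - 1) ^ (#S - 1) * Fintype.card κ ^ (Fintype.card α - #S) := by
  let allowed (i : α) : Finset κ := if i = j then {c} else if i ∈ S then univ.erase c else univ
  have isolating_eq : ({f : α → κ | Isolates (colorRow c f) S j} : Finset (α → κ)) =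
      Fintype.piFinset allowed := by
    ext f
    simp only [mem_filter_univ, isolates_colorRow_iff, Fintype.mem_piFinset, allowed]
    grind
  have prod_erase : ∏ i ∈ S.erase j, #(allowed i) = (Fintype.card κ - 1) ^ (#S - 1) := by
    rw [← card_erase_of_mem hj]
    refine prod_eq_pow_card fun i hi => ?_
    simp [allowed, ne_of_mem_erase hi, mem_of_mem_erase hi]
  have prod_compl : ∏ i ∈ Sᶜ, #(allowed i) = Fintype.card κ ^ (Fintype.card α - #S) := by
    rw [← card_compl]
    refine prod_eq_pow_card fun i hi => ?_
    have hiS : i ∉ S := mem_compl.1 hi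
    simp [allowed, hiS, ne_of_mem_of_not_mem hj hiS |>.symm]
  rw [isolating_eq, Fintype.card_piFinset, ← prod_mul_prod_compl S, ← mul_prod_erase S _ hj,
    prod_erase, prod_compl]
  simp [allowed]

theorem card_filter_not_isolates_colorRow_le {t : ℕ} {S : Finset α} (hS : #S ≤ t + 1) {j : α}
    (hj : j ∈ S) :
    (#{f : α → Fin (t + 1) | ¬ Isolates (colorRow 0 f) S j} : ℝ) ≤
      exp (-(1 / (exp 1 * (t + 1)))) * Fintype.card (α → Fin (t + 1)) := by
  have card_isolating : (#{f : α → Fin (t + 1) | Isolates (colorRow 0 f) S j} : ℝ) =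
      (t : ℝ) ^ (#S - 1) * ((t : ℝ) + 1) ^ (Fintype.card α - #S) := by
    rw [card_filter_isolates_colorRow 0 hj, Fintype.card_fin]
    push_cast [Nat.add_sub_cancel]
    rfl
  have card_rows : (Fintype.card (α → Fin (t + 1)) : ℝ) =
      ((t : ℝ) + 1) ^ (#S - 1) * (t + 1) * (t + 1) ^ (Fintype.card α - #S) := by
    have hS_pos : 0 < #S := card_pos.2 ⟨j, hj⟩
    have hS_le : #S ≤ Fintype.card α := S.card_le_univ
    rw [← pow_succ, ← pow_add, Fintype.card_fun, Fintype.card_fin,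
      show #S - 1 + 1 + (Fintype.card α - #S) = Fintype.card α by omega]
    push_cast
    rfl
  have many_isolating : 1 / (exp 1 * (t + 1)) * (Fintype.card (α → Fin (t + 1)) : ℝ) ≤
      #{f : α → Fin (t + 1) | Isolates (colorRow 0 f) S j} := by
    rw [card_isolating, card_rows, one_div_mul_eq_div, div_le_iff₀ (by positivity)]
    have pow_le := add_one_pow_le_exp_one_mul_pow (m := #S - 1) (t := t) (by omega)
    calc ((t : ℝ) + 1) ^ (#S - 1) * (t + 1) * (t + 1) ^ (Fintype.card α - #S)
        ≤ exp 1 * (t : ℝ) ^ (#S - 1) * (t + 1) * (t + 1) ^ (Fintype.card α - #S) := by gcongr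
      _ = (t : ℝ) ^ (#S - 1) * (t + 1) ^ (Fintype.card α - #S) * (exp 1 * (t + 1)) := by ring
  have card_split : (#{f : α → Fin (t + 1) | Isolates (colorRow 0 f) S j} : ℝ) +
      #{f : α → Fin (t + 1) | ¬ Isolates (colorRow 0 f) S j} =
      Fintype.card (α → Fin (t + 1)) := by
    exact_mod_cast card_filter_add_card_filter_not (s := univ) _
  calc (#{f : α → Fin (t + 1) | ¬ Isolates (colorRow 0 f) S j} : ℝ)
      ≤ (1 - 1 / (exp 1 * (t + 1))) * Fintype.card (α → Fin (t + 1)) := by linarith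
    _ ≤ exp (-(1 / (exp 1 * (t + 1)))) * Fintype.card (α → Fin (t + 1)) := by
      gcongr
      exact one_sub_le_exp_neg _

variable [Fintype ρ]

theorem card_filter_forall_not_isolates_colorRow_le [DecidableEq ρ] {t : ℕ} {S : Finset α}
    (hS : #S ≤ t + 1) {j : α} (hj : j ∈ S) :
    (#{F : ρ → α → Fin (t + 1) | ∀ r, ¬ Isolates (colorRow 0 (F r)) S j} : ℝ) ≤
      exp (-(Fintype.card ρ / (exp 1 * (t + 1)))) * Fintype.card (ρ → α → Fin (t + 1)) := by
  have eq_piFinset :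
      ({F : ρ → α → Fin (t + 1) | ∀ r, ¬ Isolates (colorRow 0 (F r)) S j} : Finset _) =
        Fintype.piFinset fun _ : ρ => {f | ¬ Isolates (colorRow 0 f) S j} := by
    ext F
    simp only [mem_filter_univ, Fintype.mem_piFinset]
  calc (#{F : ρ → α → Fin (t + 1) | ∀ r, ¬ Isolates (colorRow 0 (F r)) S j} : ℝ)
      = (#{f : α → Fin (t + 1) | ¬ Isolates (colorRow 0 f) S j} : ℝ) ^ Fintype.card ρ := by
        rw [eq_piFinset, Fintype.card_piFinset, prod_const, card_univ, Nat.cast_pow]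
    _ ≤ (exp (-(1 / (exp 1 * (t + 1)))) * Fintype.card (α → Fin (t + 1))) ^ Fintype.card ρ := by
        gcongr
        exact card_filter_not_isolates_colorRow_le hS hj
    _ = exp (-(Fintype.card ρ / (exp 1 * (t + 1)))) * Fintype.card (ρ → α → Fin (t + 1)) := by
        rw [mul_pow, ← exp_nat_mul, Fintype.card_fun (α := ρ), Nat.cast_pow, mul_neg, mul_one_div]

theorem card_filter_not_separates_colorRow_le [DecidableEq ρ] {t : ℕ} {S : Finset α}
    (hS : #S ≤ t + 1) :
    (#{F : ρ → α → Fin (t + 1) | ¬ Separates (fun r => colorRow 0 (F r)) S} : ℝ) ≤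
      (t + 1) * exp (-(Fintype.card ρ / (exp 1 * (t + 1)))) *
        Fintype.card (ρ → α → Fin (t + 1)) := by
  have union_bound : #{F : ρ → α → Fin (t + 1) | ¬ Separates (fun r => colorRow 0 (F r)) S} ≤
      ∑ j ∈ S, #{F : ρ → α → Fin (t + 1) | ∀ r, ¬ Isolates (colorRow 0 (F r)) S j} := by
    refine (card_le_card fun F hF => ?_).trans card_biUnion_le
    simpa [Separates] using hF
  calc (#{F : ρ → α → Fin (t + 1) | ¬ Separates (fun r => colorRow 0 (F r)) S} : ℝ)
      ≤ ∑ j ∈ S, (#{F : ρ → α → Fin (t + 1) | ∀ r, ¬ Isolates (colorRow 0 (F r)) S j} : ℝ) := by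
        exact_mod_cast union_bound
    _ ≤ ∑ _j ∈ S, exp (-(Fintype.card ρ / (exp 1 * (t + 1)))) *
          Fintype.card (ρ → α → Fin (t + 1)) :=
        sum_le_sum fun j hj => card_filter_forall_not_isolates_colorRow_le hS hj
    _ = #S * (exp (-(Fintype.card ρ / (exp 1 * (t + 1)))) *
          Fintype.card (ρ → α → Fin (t + 1))) := by rw [sum_const, nsmul_eq_mul]
    _ ≤ (t + 1) * exp (-(Fintype.card ρ / (exp 1 * (t + 1)))) *
          Fintype.card (ρ → α → Fin (t + 1)) := by
        rw [mul_assoc]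
        gcongr
        exact_mod_cast hS

theorem isTypeTwoDisjunct_of_card_filter_not_separates_le {t : ℕ} {ε : ℝ} {A : ρ → α → Bool}
    (hA : (#{S ∈ powersetCard (t + 1) (univ : Finset α) | ¬ Separates A S} : ℝ) ≤
      ε * #(powersetCard (t + 1) (univ : Finset α))) :
    IsTypeTwoDisjunct t ε A := by
  have card_split : (#{S ∈ powersetCard (t + 1) (univ : Finset α) | Separates A S} : ℝ) +
      #{S ∈ powersetCard (t + 1) (univ : Finset α) | ¬ Separates A S} =
      #(powersetCard (t + 1) (univ : Finset α)) := by
    exact_mod_cast card_filter_add_card_filter_not _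
  rw [card_powersetCard, card_univ] at hA card_split
  unfold IsTypeTwoDisjunct
  linarith

variable (ρ α)

theorem exists_isTypeTwoDisjunct_of_le_card {t : ℕ} {ε : ℝ} (hε : 0 < ε)
    (hρ : exp 1 * (t + 1) * log ((t + 1) / ε) ≤ Fintype.card ρ) :
    ∃ A : ρ → α → Bool, IsTypeTwoDisjunct t ε A := by
  classical
  have failure_le : ((t : ℝ) + 1) * exp (-(Fintype.card ρ / (exp 1 * (t + 1)))) ≤ ε := by
    have log_le : log ((t + 1) / ε) ≤ Fintype.card ρ / (exp 1 * (t + 1)) := by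
      rwa [le_div_iff₀ (by positivity), mul_comm]
    rw [log_le_iff_le_exp (by positivity), div_le_iff₀ hε] at log_le
    rwa [exp_neg, mul_inv_le_iff₀ (exp_pos _), mul_comm ε]
  obtain ⟨F, hF⟩ := exists_card_filter_le_mul_card (powersetCard (t + 1) (univ : Finset α))
    (fun (F : ρ → α → Fin (t + 1)) S => ¬ Separates (fun r => colorRow 0 (F r)) S) (δ := ε)
    fun S hS => (card_filter_not_separates_colorRow_le (mem_powersetCard_univ.1 hS).le).trans <|
      mul_le_mul_of_nonneg_right failure_le (Nat.cast_nonneg _)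
  exact ⟨_, isTypeTwoDisjunct_of_card_filter_not_separates_le hF⟩

theorem exists_isTypeTwoDisjunct_le_mul_log {t : ℕ} (ht : 0 < t) {ε : ℝ} (hε0 : 0 < ε)
    (hε1 : ε ≤ 1) :
    ∃ (M : ℕ) (A : Fin M → α → Bool), IsTypeTwoDisjunct t ε A ∧
      (M : ℝ) ≤ 2 * exp 1 * t * log (2 * (t + 1) / ε) := by
  have ht1 : (1 : ℝ) ≤ t := by exact_mod_cast ht
  have hlog_nonneg : 0 ≤ log ((t + 1) / ε) := log_nonneg <| by
    rw [one_le_div hε0]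
    linarith
  obtain ⟨A, hA⟩ := exists_isTypeTwoDisjunct_of_le_card
    (Fin ⌈exp 1 * (t + 1) * log ((t + 1) / ε)⌉₊) α hε0 (by simpa using Nat.le_ceil _)
  refine ⟨_, A, hA, ?_⟩
  have one_le : 1 ≤ 2 * exp 1 * t * log 2 := by
    have : 1 ≤ 2 * log 2 := by linarith [log_two_gt_d9]
    have : 1 ≤ exp 1 := one_le_exp zero_le_one
    calc (1 : ℝ) ≤ exp 1 * t * (2 * log 2) := by
          refine one_le_mul_of_one_le_of_one_le (one_le_mul_of_one_le_of_one_le ?_ ?_) ?_ <;>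
            assumption
      _ = 2 * exp 1 * t * log 2 := by ring
  calc (⌈exp 1 * (t + 1) * log ((t + 1) / ε)⌉₊ : ℝ)
      ≤ exp 1 * (t + 1) * log ((t + 1) / ε) + 1 := (Nat.ceil_lt_add_one (by positivity)).le
    _ ≤ exp 1 * (t + t) * log ((t + 1) / ε) + 2 * exp 1 * t * log 2 := by gcongr
    _ = 2 * exp 1 * t * (log 2 + log ((t + 1) / ε)) := by ring
    _ = 2 * exp 1 * t * log (2 * (t + 1) / ε) := by
        rw [← log_mul two_ne_zero (by positivity), mul_div_assoc]

theorem mul_le_rpow_three_halves_mul_sqrt_div {a t L : ℝ} (ht : 0 < t) (hL : 0 < L)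
    (hLt : L < a * t) :
    t * L ≤ 4 * √a * t ^ ((3 : ℝ) / 2) * √L / (log t - log L + log (4 * a)) := by
  have ha : 0 < a := pos_of_mul_pos_left (hL.trans hLt) ht.le
  have denom_eq : log t - log L + log (4 * a) = log (4 * a * t / L) := by
    rw [← log_div ht.ne' hL.ne', ← log_mul (by positivity) (by positivity)]
    congr 1
    ring
  have denom_pos : 0 < log (4 * a * t / L) := log_pos <| by
    rw [one_lt_div hL]
    linarith
  rw [denom_eq, le_div_iff₀ denom_pos]
  calc t * L * log (4 * a * t / L) = t * (L * log (4 * a * t / L)) := mul_assoc ..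
    _ ≤ t * (2 * √(4 * a * t * L)) := by
        have mul_log_le := mul_log_div_le_two_mul_sqrt (x := 4 * a * t) (by positivity) hL.le
        gcongr
    _ = 4 * √a * t ^ ((3 : ℝ) / 2) * √L := by
        have rpow_eq : t ^ ((3 : ℝ) / 2) = t * √t := by
          rw [sqrt_eq_rpow, ← rpow_one_add' ht.le (by norm_num)]
          norm_num
        have sqrt_four : √(4 : ℝ) = 2 := by
          rw [show (4 : ℝ) = 2 ^ 2 by norm_num, sqrt_sq zero_le_two]
        rw [sqrt_mul (by positivity), sqrt_mul (by positivity), sqrt_mul (by positivity),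
          sqrt_four, rpow_eq]
        ring

theorem stmt_18_general {a : ℝ} {t N : ℕ} (htN : t < N) {ε : ℝ}
    (hε : 2 * ((t : ℝ) + 1) * exp (-a * t) < ε) (hε1 : ε < 1) :
    ∃ (M : ℕ) (A : Fin M → Fin N → Bool), IsTypeTwoDisjunct t ε A ∧
      (M : ℝ) ≤ 16 * exp 1 * √a * (t : ℝ) ^ ((3 : ℝ) / 2) * log N *
        √(log (2 * (t + 1) / ε)) / (log t - log (log (2 * (t + 1) / ε)) + log (4 * a)) := by
  have hε0 : 0 < ε := (by positivity : 0 < 2 * ((t : ℝ) + 1) * exp (-a * t)).trans hε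
  have ht : 0 < t := Nat.pos_of_ne_zero <| by
    rintro rfl
    norm_num at hε
    linarith
  obtain ⟨M, A, hA, hM⟩ := exists_isTypeTwoDisjunct_le_mul_log (Fin N) ht hε0 hε1.le
  refine ⟨M, A, hA, hM.trans ?_⟩
  set L := log (2 * ((t : ℝ) + 1) / ε)
  have hL0 : 0 < L := log_pos <| by
    rw [one_lt_div hε0]
    linarith [(Nat.cast_nonneg t : (0 : ℝ) ≤ t)]
  have hLt : L < a * t := log_div_lt_of_mul_exp_neg_lt (by positivity) (by rwa [← neg_mul])
  have hN : 1 ≤ 2 * log N := by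
    have : log 2 ≤ log N := log_le_log two_pos (by exact_mod_cast (by omega : 2 ≤ N))
    linarith [log_two_gt_d9]
  have htL := mul_le_rpow_three_halves_mul_sqrt_div (by exact_mod_cast ht) hL0 hLt
  calc 2 * exp 1 * t * L ≤ 2 * exp 1 * t * L * (2 * log N) :=
        le_mul_of_one_le_right (by positivity) hN
    _ = 4 * exp 1 * log N * (t * L) := by ring
    _ ≤ 4 * exp 1 * log N * (4 * √a * (t : ℝ) ^ ((3 : ℝ) / 2) * √L /
          (log t - log L + log (4 * a))) := by gcongr
    _ = 16 * exp 1 * √a * (t : ℝ) ^ ((3 : ℝ) / 2) * log N * √L /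
          (log t - log L + log (4 * a)) := by ring

end

/-- Theorem 2 of the paper: for every constant `a > 1` there are a constant `C > 0` and a
threshold `t₀` such that for all `t ≥ t₀`, all `N > t` and all `ε` with
`2(t+1)·e^{-at} < ε < 1`, there exists an `M×N` binary matrix which is type-2
`(t,ε)`-disjunct — at least `(1-ε)·C(N,t+1)` of the `(t+1)`-element sets of columns are such
that every column of the set has a row where it is `1` and the other columns of the set are
`0` (i.e. the corresponding submatrix contains `t+1` rows forming a permutation matrix) —
with `M ≤ C·t^{3/2}·ln N·√(ln(2(t+1)/ε)) / (ln t − ln ln(2(t+1)/ε) + ln(4a))`. -/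
theorem stmt_18 (a : ℝ) (ha : 1 < a) :
    ∃ Cst : ℝ, 0 < Cst ∧ ∃ t₀ : ℕ, ∀ t : ℕ, t₀ ≤ t → ∀ N : ℕ, t < N →
      ∀ ε : ℝ, 2 * ((t : ℝ) + 1) * Real.exp (-a * (t : ℝ)) < ε → ε < 1 →
        ∃ M : ℕ, ∃ A : Fin M → Fin N → Bool,
          ((1 - ε) * (N.choose (t + 1) : ℝ) ≤
            ((((Finset.univ : Finset (Fin N)).powersetCard (t + 1)).filter fun S =>
              ∀ j ∈ S, ∃ r : Fin M, A r j = true ∧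
                ∀ j' ∈ S, j' ≠ j → A r j' = false).card : ℝ)) ∧
          (M : ℝ) ≤ Cst * (t : ℝ) ^ ((3 : ℝ) / 2) * Real.log (N : ℝ) *
            Real.sqrt (Real.log (2 * ((t : ℝ) + 1) / ε)) /
            (Real.log (t : ℝ) - Real.log (Real.log (2 * ((t : ℝ) + 1) / ε)) +
              Real.log (4 * a)) := by
  refine ⟨16 * Real.exp 1 * √a, by positivity, 0, fun t _ N htN ε hε hε1 => ?_⟩
  obtain ⟨M, A, hA, hM⟩ := stmt_18_general htN hε hε1
  rw [IsTypeTwoDisjunct, Fintype.card_fin] at hA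
  exact ⟨M, A, by convert hA; rfl, hM⟩
end
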